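/- Let 2 ≤ B < N ≤ d + 1. Over pairs (u, v) with ‖u i‖ = ‖v i‖ = 1 for all i, the set of minimizers of the average mini-batch loss (1/C(N,B)) Σ_{S ⊆ Fin N, |S| = B} L_S(u,v) equals the set of minimizers of the full-batch loss L(u,v); in particular, any pair (u,v) with u = v whose family (u i) forms a simplex ETF minimizes the average mini-batch loss over all unit-norm pairs. -/

import Mathlib

open scoped RealInnerProductSpace BigOperators
open Finset

noncomputable def fullLoss {N d : ℕ} (u v : Fin N → EuclideanSpace ℝ (Fin d)) : ℝ :=
  -(1/(N:ℝ)) * ∑ i, Real.log (Real.exp ⟪u i, v i⟫ / ∑ j, Real.exp ⟪u i, v j⟫)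
  - (1/(N:ℝ)) * ∑ i, Real.log (Real.exp ⟪v i, u i⟫ / ∑ j, Real.exp ⟪v i, u j⟫)

noncomputable def batchLoss {N d : ℕ} (S : Finset (Fin N))
    (u v : Fin N → EuclideanSpace ℝ (Fin d)) : ℝ :=
  -(1/(S.card : ℝ)) * ∑ i ∈ S, Real.log (Real.exp ⟪u i, v i⟫ / ∑ j ∈ S, Real.exp ⟪u i, v j⟫)
  - (1/(S.card : ℝ)) * ∑ i ∈ S, Real.log (Real.exp ⟪v i, u i⟫ / ∑ j ∈ S, Real.exp ⟪v i, u j⟫)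

def IsSimplexETF {N d : ℕ} (u : Fin N → EuclideanSpace ℝ (Fin d)) : Prop :=
  (∀ i, ‖u i‖ = 1) ∧ ∀ i j, i ≠ j → ⟪u i, u j⟫ = -(1/((N:ℝ) - 1))

def IsSimplexCrossPolytope {N d : ℕ} (u : Fin N → EuclideanSpace ℝ (Fin d)) : Prop :=
  (∀ i, ‖u i‖ = 1) ∧ ∀ i, ∃ j, ⟪u i, u j⟫ = -1 ∧ (∀ j', ⟪u i, u j'⟫ = -1 → j' = j) ∧
    ∀ k, k ≠ i → k ≠ j → ⟪u i, u k⟫ = 0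

def SymmAntipodal {N d : ℕ} (u v : Fin N → EuclideanSpace ℝ (Fin d)) : Prop :=
  u = v ∧ ∀ i, ∃ j, u j = -(u i)

noncomputable def avgBatchLoss {N d : ℕ} (B : ℕ)
    (u v : Fin N → EuclideanSpace ℝ (Fin d)) : ℝ :=
  (1/(N.choose B : ℝ)) * ∑ S ∈ Finset.powersetCard B (Finset.univ : Finset (Fin N)), batchLoss S u v

/-!
Linearizing log-sum-exp at a logit profile whose positive entry exceeds every other entry by
`c = N / (N - 1)` bounds each row of a mini-batch loss from below, with equality only at that
profile. Summed over all mini-batches, the linear terms become a positive multiple of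
`∑ i, ∑ j ≠ i, (⟪u i, v j⟫ - ⟪u i, v i⟫ + c) = ⟪∑ i, u i, ∑ i, v i⟫ - N * ∑ i, ⟪u i, v i⟫ + N ^ 2`,
which is nonnegative on unit vectors and vanishes only for `u = v`. So for every batch size `B ≥ 2`,
including `B = N`, the minimizers are exactly the pairs `(u, u)` with `u` a simplex ETF.
-/

section LogSumExp

variable {ι : Type*} {s : Finset ι}

/-- The log-partition function of the logits `x` on `s`. -/
noncomputable def logSumExp (s : Finset ι) (x : ι → ℝ) : ℝ :=
  Real.log (∑ j ∈ s, Real.exp (x j))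

/-- The softmax distribution of the logits `x` on `s`, i.e. the gradient of `logSumExp s` at `x`;
its value at indices outside `s` is meaningless. -/
noncomputable def softmax (s : Finset ι) (x : ι → ℝ) (j : ι) : ℝ :=
  Real.exp (x j) / ∑ k ∈ s, Real.exp (x k)

lemma sum_exp_pos (hs : s.Nonempty) (x : ι → ℝ) : 0 < ∑ j ∈ s, Real.exp (x j) :=
  sum_pos (fun _ _ => Real.exp_pos _) hs

lemma exp_logSumExp (hs : s.Nonempty) (x : ι → ℝ) :
    Real.exp (logSumExp s x) = ∑ j ∈ s, Real.exp (x j) :=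
  Real.exp_log (sum_exp_pos hs x)

lemma softmax_pos (hs : s.Nonempty) (x : ι → ℝ) (j : ι) : 0 < softmax s x j :=
  div_pos (Real.exp_pos _) (sum_exp_pos hs x)

lemma sum_softmax (hs : s.Nonempty) (x : ι → ℝ) : ∑ j ∈ s, softmax s x j = 1 := by
  simp only [softmax, ← sum_div, div_self (sum_exp_pos hs x).ne']

lemma sum_softmax_mul_exp_sub (hs : s.Nonempty) (a x : ι → ℝ) :
    ∑ j ∈ s, softmax s a j * Real.exp (x j - a j) =
      Real.exp (logSumExp s x - logSumExp s a) := by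
  rw [Real.exp_sub, exp_logSumExp hs, exp_logSumExp hs, sum_div]
  refine sum_congr rfl fun j _ => ?_
  rw [softmax, div_mul_eq_mul_div, ← Real.exp_add, add_sub_cancel]

lemma sum_softmax_mul_sub_le (hs : s.Nonempty) (a x : ι → ℝ) :
    ∑ j ∈ s, softmax s a j * (x j - a j) ≤ logSumExp s x - logSumExp s a := by
  rw [← Real.exp_le_exp, ← sum_softmax_mul_exp_sub hs]
  exact convexOn_exp.map_sum_le (fun j _ => (softmax_pos hs a j).le) (sum_softmax hs a)
    fun _ _ => Set.mem_univ _

lemma sum_softmax_mul_sub_eq_iff (hs : s.Nonempty) (a x : ι → ℝ) :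
    ∑ j ∈ s, softmax s a j * (x j - a j) = logSumExp s x - logSumExp s a ↔
      ∀ ⦃j⦄, j ∈ s → ∀ ⦃k⦄, k ∈ s → x j - a j = x k - a k := by
  rw [← Real.exp_injective.eq_iff, ← sum_softmax_mul_exp_sub hs]
  exact strictConvexOn_exp.map_sum_eq_iff_of_pos (fun j _ => softmax_pos hs a j) (sum_softmax hs a)
    fun _ _ => Set.mem_univ _

end LogSumExp

section Margin

variable {ι : Type*} {s : Finset ι} {i : ι}

/-- The partition function of `m` logits of which one is `0` and all others are `-c`. -/
noncomputable def marginPartition (m : ℕ) (c : ℝ) : ℝ :=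
  1 + (m - 1) * Real.exp (-c)

/-- The cross-entropy loss of the logits `x` on `s` with respect to the label `i`. -/
noncomputable def crossEntropy (s : Finset ι) (x : ι → ℝ) (i : ι) : ℝ :=
  logSumExp s x - x i

lemma marginPartition_pos {m : ℕ} (hm : 1 ≤ m) (c : ℝ) : 0 < marginPartition m c := by
  have : (0 : ℝ) ≤ m - 1 := sub_nonneg.2 (by exact_mod_cast hm)
  unfold marginPartition
  positivity

lemma log_exp_div_sum_exp (hs : s.Nonempty) (x : ι → ℝ) (i : ι) :
    Real.log (Real.exp (x i) / ∑ j ∈ s, Real.exp (x j)) = -crossEntropy s x i := by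
  rw [Real.log_div (Real.exp_pos _).ne' (sum_exp_pos hs x).ne', Real.log_exp, crossEntropy,
    logSumExp, neg_sub]

variable [DecidableEq ι]

/-- The logits on which the label `i` leads every other index by the margin `c`. -/
def marginLogits (i : ι) (t c : ℝ) : ι → ℝ :=
  fun j => if j = i then t else t - c

lemma marginLogits_self (i : ι) (t c : ℝ) : marginLogits i t c i = t :=
  if_pos rfl

lemma marginLogits_of_ne {j : ι} (hj : j ≠ i) (t c : ℝ) : marginLogits i t c j = t - c :=
  if_neg hj

lemma sum_exp_marginLogits (hi : i ∈ s) (t c : ℝ) :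
    ∑ j ∈ s, Real.exp (marginLogits i t c j) = Real.exp t * marginPartition #s c := by
  have sum_erase_eq : ∑ j ∈ s.erase i, Real.exp (marginLogits i t c j) =
      (#s - 1) * (Real.exp t * Real.exp (-c)) := by
    rw [sum_congr rfl fun j hj => by rw [marginLogits_of_ne (ne_of_mem_erase hj)], sum_const,
      nsmul_eq_mul, cast_card_erase_of_mem hi, ← Real.exp_add, ← sub_eq_add_neg]
  rw [← add_sum_erase s _ hi, sum_erase_eq, marginLogits_self, marginPartition]
  ring

lemma logSumExp_marginLogits (hi : i ∈ s) (t c : ℝ) :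
    logSumExp s (marginLogits i t c) = t + Real.log (marginPartition #s c) := by
  rw [logSumExp, sum_exp_marginLogits hi, Real.log_mul (Real.exp_pos t).ne'
    (marginPartition_pos (card_pos.2 ⟨i, hi⟩) c).ne', Real.log_exp]

lemma softmax_marginLogits_of_ne (hi : i ∈ s) {j : ι} (hj : j ≠ i) (t c : ℝ) :
    softmax s (marginLogits i t c) j = Real.exp (-c) / marginPartition #s c := by
  rw [softmax, sum_exp_marginLogits hi, marginLogits_of_ne hj, sub_eq_add_neg, Real.exp_add,
    mul_div_mul_left _ _ (Real.exp_pos t).ne']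

/-- The tangent approximation of `crossEntropy s · i` at logits where `i` leads by `c`. -/
noncomputable def marginTangent (s : Finset ι) (x : ι → ℝ) (i : ι) (c : ℝ) : ℝ :=
  Real.log (marginPartition #s c) +
    Real.exp (-c) / marginPartition #s c * ∑ j ∈ s.erase i, (x j - x i + c)

lemma sum_softmax_marginLogits_mul_sub (hi : i ∈ s) (x : ι → ℝ) (c : ℝ) :
    ∑ j ∈ s, softmax s (marginLogits i (x i) c) j * (x j - marginLogits i (x i) c j) =
      Real.exp (-c) / marginPartition #s c * ∑ j ∈ s.erase i, (x j - x i + c) := by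
  rw [← add_sum_erase s _ hi, marginLogits_self, sub_self, mul_zero, zero_add, mul_sum]
  refine sum_congr rfl fun j hj => ?_
  rw [softmax_marginLogits_of_ne hi (ne_of_mem_erase hj), marginLogits_of_ne (ne_of_mem_erase hj)]
  ring

lemma marginTangent_le_crossEntropy (hi : i ∈ s) (x : ι → ℝ) (c : ℝ) :
    marginTangent s x i c ≤ crossEntropy s x i := by
  have h := sum_softmax_mul_sub_le ⟨i, hi⟩ (marginLogits i (x i) c) x
  rw [sum_softmax_marginLogits_mul_sub hi, logSumExp_marginLogits hi] at h
  rw [marginTangent, crossEntropy]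
  linarith

lemma marginTangent_eq_crossEntropy_iff (hi : i ∈ s) (x : ι → ℝ) (c : ℝ) :
    marginTangent s x i c = crossEntropy s x i ↔ ∀ j ∈ s, j ≠ i → x j - x i = -c := by
  have h := sum_softmax_mul_sub_eq_iff ⟨i, hi⟩ (marginLogits i (x i) c) x
  rw [sum_softmax_marginLogits_mul_sub hi, logSumExp_marginLogits hi] at h
  have tangent_eq_iff : marginTangent s x i c = crossEntropy s x i ↔
      ∀ ⦃j⦄, j ∈ s → ∀ ⦃k⦄, k ∈ s →
        x j - marginLogits i (x i) c j = x k - marginLogits i (x i) c k := by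
    rw [← h, marginTangent, crossEntropy]
    constructor <;> intro h' <;> linarith
  rw [tangent_eq_iff]
  constructor
  · intro const j hj hji
    have := const hj hi
    rw [marginLogits_self, marginLogits_of_ne hji] at this
    linarith
  · intro margin
    have residual_eq_zero : ∀ j ∈ s, x j - marginLogits i (x i) c j = 0 := by
      intro j hj
      obtain rfl | hji := eq_or_ne j i
      · rw [marginLogits_self, sub_self]
      · rw [marginLogits_of_ne hji]
        linarith [margin j hj hji]
    exact fun j hj k hk => (residual_eq_zero j hj).trans (residual_eq_zero k hk).symm

end Margin

section Batches

variable {ι : Type*} [Fintype ι] {B : ℕ}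

/-- The total cross-entropy, over all batches of size `B`, of the rows of a score matrix `M`, where
the label of row `i` is `i`. -/
noncomputable def batchCrossEntropySum (B : ℕ) (M : ι → ι → ℝ) : ℝ :=
  ∑ S ∈ powersetCard B univ, ∑ i ∈ S, crossEntropy S (M i) i

lemma sum_powersetCard_sum_const {R : Type*} [NonAssocSemiring R] (B : ℕ) (r : R) :
    ∑ S ∈ powersetCard B (univ : Finset ι), ∑ _i ∈ S, r = (Fintype.card ι).choose B * (B * r) := by
  rw [sum_congr rfl fun S hS => by rw [sum_const, (mem_powersetCard.1 hS).2, nsmul_eq_mul],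
    sum_const, card_powersetCard, card_univ, nsmul_eq_mul]

variable [DecidableEq ι]

lemma sum_powersetCard_sum_sum_erase {R : Type*} [NonAssocSemiring R] (hB : 2 ≤ B)
    (y : ι → ι → R) :
    ∑ S ∈ powersetCard B univ, ∑ i ∈ S, ∑ j ∈ S.erase i, y i j =
      (Fintype.card ι - 2).choose (B - 2) * ∑ i, ∑ j ∈ univ.erase i, y i j := by
  calc ∑ S ∈ powersetCard B univ, ∑ i ∈ S, ∑ j ∈ S.erase i, y i j
      = ∑ i, ∑ S ∈ powersetCard B univ with i ∈ S, ∑ j ∈ S.erase i, y i j :=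
        sum_comm' (by simp [and_comm])
    _ = ∑ i, ∑ j ∈ univ.erase i, ∑ S ∈ powersetCard B univ with {i, j} ⊆ S, y i j :=
        sum_congr rfl fun i _ => sum_comm' (by grind)
    _ = _ := by
        rw [mul_sum]
        refine sum_congr rfl fun i _ => ?_
        rw [mul_sum]
        refine sum_congr rfl fun j hj => ?_
        have card_pair_eq : #{i, j} = 2 := card_pair (ne_of_mem_erase hj).symm
        rw [sum_const, card_filter_powersetCard_subset _ _ _ (subset_univ _)
          (card_pair_eq.trans_le hB), card_pair_eq, card_univ, nsmul_eq_mul]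

lemma sum_powersetCard_sum_marginTangent (hB : 2 ≤ B) (M : ι → ι → ℝ) (c : ℝ) :
    ∑ S ∈ powersetCard B univ, ∑ i ∈ S, marginTangent S (M i) i c =
      (Fintype.card ι).choose B * (B * Real.log (marginPartition B c)) +
        Real.exp (-c) / marginPartition B c * ((Fintype.card ι - 2).choose (B - 2) *
          ∑ i, ∑ j ∈ univ.erase i, (M i j - M i i + c)) := by
  rw [← sum_powersetCard_sum_const, ← sum_powersetCard_sum_sum_erase hB, mul_sum,
    ← sum_add_distrib]
  refine sum_congr rfl fun S hS => ?_
  rw [mul_sum, ← sum_add_distrib]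
  simp only [marginTangent, (mem_powersetCard.1 hS).2]

lemma sum_marginTangent_le_batchCrossEntropySum (B : ℕ) (M : ι → ι → ℝ) (c : ℝ) :
    ∑ S ∈ powersetCard B univ, ∑ i ∈ S, marginTangent S (M i) i c ≤ batchCrossEntropySum B M :=
  sum_le_sum fun _ _ => sum_le_sum fun i hi => marginTangent_le_crossEntropy hi (M i) c

lemma sum_marginTangent_eq_batchCrossEntropySum_iff (hB : 2 ≤ B) (hBι : B ≤ Fintype.card ι)
    (M : ι → ι → ℝ) (c : ℝ) :
    ∑ S ∈ powersetCard B univ, ∑ i ∈ S, marginTangent S (M i) i c = batchCrossEntropySum B M ↔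
      ∀ i j, i ≠ j → M i j - M i i = -c := by
  have row_le (S : Finset ι) : ∀ i ∈ S, marginTangent S (M i) i c ≤ crossEntropy S (M i) i :=
    fun i hi => marginTangent_le_crossEntropy hi (M i) c
  rw [batchCrossEntropySum, sum_eq_sum_iff_of_le fun S _ => sum_le_sum (row_le S)]
  constructor
  · intro batch_eq i j hij
    obtain ⟨S, hijS, hS, hSB⟩ := exists_subsuperset_card_eq (subset_univ {i, j})
      ((card_pair hij).trans_le hB) hBι
    have hi : i ∈ S := hijS (mem_insert_self i {j})
    have hj : j ∈ S := hijS (mem_insert_of_mem (mem_singleton_self j))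
    have row_eq := (sum_eq_sum_iff_of_le (row_le S)).1
      (batch_eq S (mem_powersetCard.2 ⟨hS, hSB⟩)) i hi
    exact (marginTangent_eq_crossEntropy_iff hi (M i) c).1 row_eq j hj hij.symm
  · exact fun margin S _ => sum_congr rfl fun i hi =>
      (marginTangent_eq_crossEntropy_iff hi (M i) c).2 fun j _ hji => margin i j hji.symm

lemma le_batchCrossEntropySum (hB : 2 ≤ B) {M : ι → ι → ℝ} {c : ℝ}
    (hM : 0 ≤ ∑ i, ∑ j ∈ univ.erase i, (M i j - M i i + c)) :
    (Fintype.card ι).choose B * (B * Real.log (marginPartition B c)) ≤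
      batchCrossEntropySum B M := by
  have hZ := marginPartition_pos (one_le_two.trans hB) c
  refine le_trans ?_ (sum_marginTangent_le_batchCrossEntropySum B M c)
  rw [sum_powersetCard_sum_marginTangent hB]
  exact le_add_of_nonneg_right (by positivity)

lemma batchCrossEntropySum_eq_iff (hB : 2 ≤ B) (hBι : B ≤ Fintype.card ι) {M : ι → ι → ℝ} {c : ℝ}
    (hM : 0 ≤ ∑ i, ∑ j ∈ univ.erase i, (M i j - M i i + c)) :
    batchCrossEntropySum B M =
        (Fintype.card ι).choose B * (B * Real.log (marginPartition B c)) ↔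
      ∀ i j, i ≠ j → M i j - M i i = -c := by
  have hZ := marginPartition_pos (one_le_two.trans hB) c
  have tangent_sum := sum_powersetCard_sum_marginTangent hB M c
  rw [← sum_marginTangent_eq_batchCrossEntropySum_iff hB hBι]
  constructor
  · intro sum_eq
    refine (sum_marginTangent_le_batchCrossEntropySum B M c).antisymm ?_
    rw [sum_eq, tangent_sum]
    exact le_add_of_nonneg_right (by positivity)
  · intro tangent_eq
    have margin := (sum_marginTangent_eq_batchCrossEntropySum_iff hB hBι M c).1 tangent_eq
    have excess_eq_zero : ∑ i, ∑ j ∈ univ.erase i, (M i j - M i i + c) = 0 :=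
      sum_eq_zero fun i _ => sum_eq_zero fun j hj => by
        rw [margin i j (ne_of_mem_erase hj).symm, neg_add_cancel]
    rw [← tangent_eq, tangent_sum, excess_eq_zero, mul_zero, mul_zero, add_zero]

end Batches

section UnitVectors

/-- The difference `1 - (-1 / (N - 1))` between the diagonal and the off-diagonal inner products of
a simplex ETF of `N` vectors. -/
noncomputable def simplexMargin (N : ℕ) : ℝ :=
  N / (N - 1)

variable {ι E : Type*} [Fintype ι]

lemma norm_sum_sq_le_card_mul_sum_norm_sq [SeminormedAddCommGroup E] (w : ι → E) :
    ‖∑ i, w i‖ ^ 2 ≤ Fintype.card ι * ∑ i, ‖w i‖ ^ 2 :=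
  calc ‖∑ i, w i‖ ^ 2 ≤ (∑ i, ‖w i‖) ^ 2 := by gcongr; exact norm_sum_le _ _
    _ ≤ Fintype.card ι * ∑ i, ‖w i‖ ^ 2 := sq_sum_le_card_mul_sum_sq

variable [NormedAddCommGroup E] [InnerProductSpace ℝ E]

lemma sum_sum_erase_inner_sub_inner_add_simplexMargin [DecidableEq ι] (hι : 2 ≤ Fintype.card ι)
    (u v : ι → E) :
    ∑ i, ∑ j ∈ univ.erase i, (⟪u i, v j⟫ - ⟪u i, v i⟫ + simplexMargin (Fintype.card ι)) =
      ⟪∑ i, u i, ∑ i, v i⟫ - Fintype.card ι * ∑ i, ⟪u i, v i⟫ + (Fintype.card ι : ℝ) ^ 2 := by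
  have card_sub_one_ne_zero : (Fintype.card ι : ℝ) - 1 ≠ 0 :=
    sub_ne_zero.2 (by exact_mod_cast (by omega : Fintype.card ι ≠ 1))
  have row_sum (i : ι) :
      ∑ j ∈ univ.erase i, (⟪u i, v j⟫ - ⟪u i, v i⟫ + simplexMargin (Fintype.card ι)) =
        ⟪u i, ∑ j, v j⟫ - Fintype.card ι * ⟪u i, v i⟫ + Fintype.card ι := by
    rw [sum_erase_eq_sub (mem_univ i), inner_sum]
    simp only [simplexMargin, sum_add_distrib, sum_sub_distrib, sum_const, card_univ, nsmul_eq_mul]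
    field_simp
    ring
  simp only [row_sum, sum_add_distrib, sum_sub_distrib, ← mul_sum, ← sum_inner, sum_const,
    card_univ, nsmul_eq_mul, sq]

variable {u v : ι → E}

lemma norm_sum_sq_add_norm_sum_sq_le (hu : ∀ i, ‖u i‖ = 1) (hv : ∀ i, ‖v i‖ = 1) :
    ‖∑ i, u i‖ ^ 2 + ‖∑ i, v i‖ ^ 2 ≤
      2 * (⟪∑ i, u i, ∑ i, v i⟫ - Fintype.card ι * ∑ i, ⟪u i, v i⟫ +
        (Fintype.card ι : ℝ) ^ 2) := by
  have sum_dist_sq : ∑ i, ‖u i - v i‖ ^ 2 = 2 * Fintype.card ι - 2 * ∑ i, ⟪u i, v i⟫ := by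
    simp only [norm_sub_sq_real, hu, hv, sum_add_distrib, sum_sub_distrib, ← mul_sum, sum_const,
      card_univ, nsmul_eq_mul]
    ring
  have cauchy_schwarz := norm_sum_sq_le_card_mul_sum_norm_sq fun i => u i - v i
  rw [sum_dist_sq, sum_sub_distrib, norm_sub_sq_real] at cauchy_schwarz
  linarith

lemma eq_of_inner_sum_sum_eq (hu : ∀ i, ‖u i‖ = 1) (hv : ∀ i, ‖v i‖ = 1)
    (h : ⟪∑ i, u i, ∑ i, v i⟫ - Fintype.card ι * ∑ i, ⟪u i, v i⟫ +
      (Fintype.card ι : ℝ) ^ 2 = 0) : u = v := by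
  obtain _ | _ := isEmpty_or_nonempty ι
  · exact Subsingleton.elim u v
  have sum_u_eq_zero : ∑ i, u i = 0 := by
    have := norm_sum_sq_add_norm_sum_sq_le hu hv
    rw [← norm_eq_zero, ← sq_eq_zero_iff]
    linarith [sq_nonneg ‖∑ i, u i‖, sq_nonneg ‖∑ i, v i‖]
  have sum_inner_eq : ∑ i, ⟪u i, v i⟫ = ∑ _i : ι, (1 : ℝ) := by
    rw [sum_u_eq_zero, inner_zero_left] at h
    have card_ne_zero : (Fintype.card ι : ℝ) ≠ 0 := by exact_mod_cast Fintype.card_ne_zero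
    rw [sum_const, card_univ, nsmul_one]
    exact mul_left_cancel₀ card_ne_zero (by linarith)
  have inner_le_one : ∀ i ∈ univ, ⟪u i, v i⟫ ≤ 1 := fun i _ => by
    simpa [hu, hv] using real_inner_le_norm (u i) (v i)
  funext i
  rw [← inner_eq_one_iff_of_norm_eq_one (𝕜 := ℝ) (hu i) (hv i)]
  exact (sum_eq_sum_iff_of_le inner_le_one).1 sum_inner_eq i (mem_univ i)

lemma sum_sum_erase_inner_sub_inner_add_simplexMargin_nonneg [DecidableEq ι]
    (hι : 2 ≤ Fintype.card ι) (hu : ∀ i, ‖u i‖ = 1) (hv : ∀ i, ‖v i‖ = 1) :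
    0 ≤ ∑ i, ∑ j ∈ univ.erase i,
      (⟪u i, v j⟫ - ⟪u i, v i⟫ + simplexMargin (Fintype.card ι)) := by
  rw [sum_sum_erase_inner_sub_inner_add_simplexMargin hι]
  have := norm_sum_sq_add_norm_sum_sq_le hu hv
  linarith [sq_nonneg ‖∑ i, u i‖, sq_nonneg ‖∑ i, v i‖]

lemma eq_of_forall_inner_sub_inner_eq (hι : 2 ≤ Fintype.card ι) (hu : ∀ i, ‖u i‖ = 1)
    (hv : ∀ i, ‖v i‖ = 1)
    (h : ∀ i j, i ≠ j → ⟪u i, v j⟫ - ⟪u i, v i⟫ = -simplexMargin (Fintype.card ι)) : u = v := by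
  classical
  refine eq_of_inner_sum_sum_eq hu hv ?_
  rw [← sum_sum_erase_inner_sub_inner_add_simplexMargin hι]
  exact sum_eq_zero fun i _ => sum_eq_zero fun j hj => by
    rw [h i j (ne_of_mem_erase hj).symm, neg_add_cancel]

end UnitVectors

section SimplexETF

/- The Gram identities for the `n + 1` vectors `-γ • ∑ k, f k` and `α • f i + β • ∑ k, f k`, where
`f` is an orthonormal family of `n` vectors. -/
lemma exists_simplex_coefficients {n : ℕ} (hn : n ≠ 0) :
    ∃ α β γ : ℝ, γ ^ 2 * n = 1 ∧ γ * (α + n * β) = 1 / n ∧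
      2 * α * β + n * β ^ 2 = -(1 / n) ∧ α ^ 2 + (2 * α * β + n * β ^ 2) = 1 := by
  have hn' : (n : ℝ) ≠ 0 := by exact_mod_cast hn
  obtain ⟨γ, hγ⟩ : ∃ γ : ℝ, γ ^ 2 = 1 / n := ⟨_, Real.sq_sqrt (by positivity)⟩
  obtain ⟨α, hα⟩ : ∃ α : ℝ, α ^ 2 = 1 + 1 / n := ⟨_, Real.sq_sqrt (by positivity)⟩
  obtain ⟨β, hβ⟩ : ∃ β : ℝ, α + n * β = γ := ⟨(γ - α) / n, by field_simp; ring⟩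
  have inner_eq : 2 * α * β + n * β ^ 2 = -(1 / n) := by
    refine mul_left_cancel₀ hn' ?_
    calc (n : ℝ) * (2 * α * β + n * β ^ 2) = (α + n * β) ^ 2 - α ^ 2 := by ring
      _ = (n : ℝ) * -(1 / n) := by rw [hβ, hγ, hα]; field_simp; ring
  refine ⟨α, β, γ, ?_, ?_, inner_eq, ?_⟩
  · rw [hγ, one_div_mul_cancel hn']
  · rw [hβ, ← sq, hγ]
  · rw [inner_eq, hα]
    ring

lemma exists_inner_eq_ite_of_orthonormal {E : Type*} [NormedAddCommGroup E] [InnerProductSpace ℝ E]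
    {n : ℕ} (hn : n ≠ 0) {f : Fin n → E} (hf : Orthonormal ℝ f) :
    ∃ u : Fin (n + 1) → E, ∀ i j, ⟪u i, u j⟫ = if i = j then 1 else -(1 / (n : ℝ)) := by
  have inner_f := orthonormal_iff_ite.1 hf
  obtain ⟨F, hF⟩ : ∃ F, F = ∑ k, f k := ⟨_, rfl⟩
  have inner_f_F (i) : ⟪f i, F⟫ = 1 := by simp [hF, inner_sum, inner_f]
  have inner_F_f (i) : ⟪F, f i⟫ = 1 := by rw [real_inner_comm, inner_f_F]
  have inner_F_F : ⟪F, F⟫ = n := by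
    nth_rw 1 [hF]
    simp [sum_inner, inner_f_F]
  obtain ⟨α, β, γ, norm_apex, inner_apex, inner_base, norm_base⟩ := exists_simplex_coefficients hn
  refine ⟨Fin.cons (-γ • F) fun i => α • f i + β • F, fun i j => ?_⟩
  cases i using Fin.cases <;> cases j using Fin.cases <;>
    simp only [Fin.cons_zero, Fin.cons_succ, inner_add_left, inner_add_right, real_inner_smul_left,
      real_inner_smul_right, inner_f, inner_f_F, inner_F_f, inner_F_F, Fin.succ_inj,
      Fin.succ_ne_zero, (Fin.succ_ne_zero _).symm, if_true, if_false]
  case zero.zero => linarith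
  case zero.succ => linarith
  case succ.zero => linarith
  case succ.succ => split_ifs <;> linarith

variable {N d : ℕ}

lemma isSimplexETF_iff_forall_inner_sub_inner_eq (hN : 2 ≤ N)
    {u : Fin N → EuclideanSpace ℝ (Fin d)} (hu : ∀ i, ‖u i‖ = 1) :
    IsSimplexETF u ↔ ∀ i j, i ≠ j → ⟪u i, u j⟫ - ⟪u i, u i⟫ = -simplexMargin N := by
  have hN' : (N : ℝ) - 1 ≠ 0 := sub_ne_zero.2 (by exact_mod_cast (by omega : N ≠ 1))
  have margin_eq : -simplexMargin N = -(1 / ((N : ℝ) - 1)) - 1 := by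
    rw [simplexMargin]
    field_simp
    ring
  simp only [IsSimplexETF, hu, implies_true, true_and, real_inner_self_eq_norm_sq, one_pow,
    margin_eq, sub_left_inj]

lemma exists_isSimplexETF (hN : 2 ≤ N) (hNd : N ≤ d + 1) :
    ∃ u : Fin N → EuclideanSpace ℝ (Fin d), IsSimplexETF u := by
  obtain ⟨n, rfl⟩ : ∃ n, N = n + 1 := ⟨N - 1, by omega⟩
  have orthonormal := (EuclideanSpace.orthonormal_single (𝕜 := ℝ) (ι := Fin d)).comp _
    (Fin.castLE_injective (Nat.le_of_succ_le_succ hNd))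
  obtain ⟨u, hu⟩ := exists_inner_eq_ite_of_orthonormal (by omega : n ≠ 0) orthonormal
  refine ⟨u, fun i => ?_, fun i j hij => ?_⟩
  · rw [norm_eq_sqrt_real_inner, hu, if_pos rfl, Real.sqrt_one]
  · rw [hu, if_neg hij, Nat.cast_add_one, add_sub_cancel_right]

end SimplexETF

section Losses

variable {N B d : ℕ} {u v : Fin N → EuclideanSpace ℝ (Fin d)}

lemma batchLoss_eq_sum_crossEntropy (S : Finset (Fin N)) (u v : Fin N → EuclideanSpace ℝ (Fin d)) :
    batchLoss S u v = (1 / #S : ℝ) * (∑ i ∈ S, crossEntropy S (fun j => ⟪u i, v j⟫) i +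
      ∑ i ∈ S, crossEntropy S (fun j => ⟪v i, u j⟫) i) := by
  have sum_log (w w' : Fin N → EuclideanSpace ℝ (Fin d)) :
      ∑ i ∈ S, Real.log (Real.exp ⟪w i, w' i⟫ / ∑ j ∈ S, Real.exp ⟪w i, w' j⟫) =
        -∑ i ∈ S, crossEntropy S (fun j => ⟪w i, w' j⟫) i := by
    rw [← sum_neg_distrib]
    exact sum_congr rfl fun i hi => log_exp_div_sum_exp ⟨i, hi⟩ (fun j => ⟪w i, w' j⟫) i
  rw [batchLoss, sum_log, sum_log]
  ring

lemma avgBatchLoss_eq_batchCrossEntropySum (B : ℕ) (u v : Fin N → EuclideanSpace ℝ (Fin d)) :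
    avgBatchLoss B u v = (1 / N.choose B : ℝ) * ((1 / B : ℝ) *
      (batchCrossEntropySum B (fun i j => ⟪u i, v j⟫) +
        batchCrossEntropySum B (fun i j => ⟪v i, u j⟫))) := by
  rw [avgBatchLoss, batchCrossEntropySum, batchCrossEntropySum, ← sum_add_distrib,
    mul_sum _ _ (1 / B : ℝ)]
  congr 1
  refine sum_congr rfl fun S hS => ?_
  rw [batchLoss_eq_sum_crossEntropy, (mem_powersetCard.1 hS).2]

lemma fullLoss_eq_avgBatchLoss (u v : Fin N → EuclideanSpace ℝ (Fin d)) :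
    fullLoss u v = avgBatchLoss N u v := by
  have powersetCard_univ : powersetCard N (univ : Finset (Fin N)) = {univ} := by
    simpa only [card_univ, Fintype.card_fin] using powersetCard_self (univ : Finset (Fin N))
  simp [avgBatchLoss, powersetCard_univ, fullLoss, batchLoss]

/-- The minimum of `avgBatchLoss B` over pairs of families of `N` unit vectors, attained at simplex
ETFs. -/
noncomputable def minAvgBatchLoss (N B : ℕ) : ℝ :=
  2 * Real.log (marginPartition B (simplexMargin N))

lemma minAvgBatchLoss_eq_mul_add (hB : B ≠ 0) (hBN : B ≤ N) :
    minAvgBatchLoss N B = (1 / N.choose B : ℝ) * ((1 / B : ℝ) *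
      (N.choose B * (B * Real.log (marginPartition B (simplexMargin N))) +
        N.choose B * (B * Real.log (marginPartition B (simplexMargin N))))) := by
  have choose_ne_zero : (N.choose B : ℝ) ≠ 0 := by exact_mod_cast (Nat.choose_pos hBN).ne'
  have hB' : (B : ℝ) ≠ 0 := by exact_mod_cast hB
  rw [minAvgBatchLoss]
  field_simp
  ring

lemma le_batchCrossEntropySum_inner (hB : 2 ≤ B) (hBN : B ≤ N) (hu : ∀ i, ‖u i‖ = 1)
    (hv : ∀ i, ‖v i‖ = 1) :
    N.choose B * (B * Real.log (marginPartition B (simplexMargin N))) ≤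
      batchCrossEntropySum B fun i j => ⟪u i, v j⟫ := by
  have nonneg := sum_sum_erase_inner_sub_inner_add_simplexMargin_nonneg
    ((hB.trans hBN).trans_eq (Fintype.card_fin N).symm) hu hv
  simpa only [Fintype.card_fin] using le_batchCrossEntropySum hB nonneg

lemma batchCrossEntropySum_inner_eq_iff (hB : 2 ≤ B) (hBN : B ≤ N) (hu : ∀ i, ‖u i‖ = 1)
    (hv : ∀ i, ‖v i‖ = 1) :
    batchCrossEntropySum B (fun i j => ⟪u i, v j⟫) =
        N.choose B * (B * Real.log (marginPartition B (simplexMargin N))) ↔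
      u = v ∧ IsSimplexETF u := by
  have hN : 2 ≤ Fintype.card (Fin N) := (hB.trans hBN).trans_eq (Fintype.card_fin N).symm
  have eq_iff := batchCrossEntropySum_eq_iff hB (hBN.trans_eq (Fintype.card_fin N).symm)
    (sum_sum_erase_inner_sub_inner_add_simplexMargin_nonneg hN hu hv)
  rw [Fintype.card_fin] at eq_iff
  rw [eq_iff, isSimplexETF_iff_forall_inner_sub_inner_eq (hB.trans hBN) hu]
  constructor
  · intro margin
    obtain rfl : u = v :=
      eq_of_forall_inner_sub_inner_eq hN hu hv (by rwa [Fintype.card_fin])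
    exact ⟨rfl, margin⟩
  · rintro ⟨rfl, margin⟩
    exact margin

lemma minAvgBatchLoss_le (hB : 2 ≤ B) (hBN : B ≤ N) (hu : ∀ i, ‖u i‖ = 1)
    (hv : ∀ i, ‖v i‖ = 1) : minAvgBatchLoss N B ≤ avgBatchLoss B u v := by
  rw [minAvgBatchLoss_eq_mul_add (by omega) hBN, avgBatchLoss_eq_batchCrossEntropySum]
  gcongr
  · exact le_batchCrossEntropySum_inner hB hBN hu hv
  · exact le_batchCrossEntropySum_inner hB hBN hv hu

lemma avgBatchLoss_eq_minAvgBatchLoss_iff (hB : 2 ≤ B) (hBN : B ≤ N) (hu : ∀ i, ‖u i‖ = 1)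
    (hv : ∀ i, ‖v i‖ = 1) :
    avgBatchLoss B u v = minAvgBatchLoss N B ↔ u = v ∧ IsSimplexETF u := by
  have inv_choose_ne_zero : (1 / N.choose B : ℝ) ≠ 0 :=
    one_div_ne_zero (by exact_mod_cast (Nat.choose_pos hBN).ne')
  have inv_B_ne_zero : (1 / B : ℝ) ≠ 0 := one_div_ne_zero (by exact_mod_cast (by omega : B ≠ 0))
  rw [minAvgBatchLoss_eq_mul_add (by omega) hBN, avgBatchLoss_eq_batchCrossEntropySum,
    mul_right_inj' inv_choose_ne_zero, mul_right_inj' inv_B_ne_zero, eq_comm,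
    add_eq_add_iff_eq_and_eq (le_batchCrossEntropySum_inner hB hBN hu hv)
      (le_batchCrossEntropySum_inner hB hBN hv hu), @eq_comm ℝ,
    batchCrossEntropySum_inner_eq_iff hB hBN hu hv, @eq_comm ℝ,
    batchCrossEntropySum_inner_eq_iff hB hBN hv hu, and_iff_left_iff_imp]
  rintro ⟨rfl, etf⟩
  exact ⟨rfl, etf⟩

lemma forall_avgBatchLoss_le_iff (hB : 2 ≤ B) (hBN : B ≤ N) (hNd : N ≤ d + 1)
    (hu : ∀ i, ‖u i‖ = 1) (hv : ∀ i, ‖v i‖ = 1) :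
    (∀ u' v' : Fin N → EuclideanSpace ℝ (Fin d), (∀ i, ‖u' i‖ = 1) → (∀ i, ‖v' i‖ = 1) →
      avgBatchLoss B u v ≤ avgBatchLoss B u' v') ↔ u = v ∧ IsSimplexETF u := by
  rw [← avgBatchLoss_eq_minAvgBatchLoss_iff hB hBN hu hv]
  constructor
  · intro minimal
    obtain ⟨w, hw⟩ := exists_isSimplexETF (hB.trans hBN) hNd
    have attained := (avgBatchLoss_eq_minAvgBatchLoss_iff hB hBN hw.1 hw.1).2 ⟨rfl, hw⟩
    exact ((minimal w w hw.1 hw.1).trans_eq attained).antisymm (minAvgBatchLoss_le hB hBN hu hv)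
  · exact fun attained u' v' hu' hv' => attained.trans_le (minAvgBatchLoss_le hB hBN hu' hv')

end Losses

/-- For `2 ≤ B < N ≤ d + 1`, over unit-norm pairs the minimizers of the average
mini-batch loss over all `C(N,B)` mini-batches coincide with the minimizers of the
full-batch loss; in particular any symmetric simplex-ETF pair minimizes the average
mini-batch loss. -/
theorem avg_miniBatch_minimizers_eq_fullBatch_minimizers
    (N B d : ℕ) (hB : 2 ≤ B) (hBN : B < N) (hNd : N ≤ d + 1) :
    (∀ u v : Fin N → EuclideanSpace ℝ (Fin d),
      (∀ i, ‖u i‖ = 1) → (∀ i, ‖v i‖ = 1) →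
      ((∀ u' v' : Fin N → EuclideanSpace ℝ (Fin d),
          (∀ i, ‖u' i‖ = 1) → (∀ i, ‖v' i‖ = 1) →
          avgBatchLoss B u v ≤ avgBatchLoss B u' v') ↔
       (∀ u' v' : Fin N → EuclideanSpace ℝ (Fin d),
          (∀ i, ‖u' i‖ = 1) → (∀ i, ‖v' i‖ = 1) →
          fullLoss u v ≤ fullLoss u' v'))) ∧
    (∀ u v : Fin N → EuclideanSpace ℝ (Fin d), u = v → IsSimplexETF u →
      ∀ u' v' : Fin N → EuclideanSpace ℝ (Fin d),
        (∀ i, ‖u' i‖ = 1) → (∀ i, ‖v' i‖ = 1) →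
        avgBatchLoss B u v ≤ avgBatchLoss B u' v') := by
  refine ⟨fun u v hu hv => ?_, fun u v huv etf => ?_⟩
  · simp only [fullLoss_eq_avgBatchLoss]
    rw [forall_avgBatchLoss_le_iff hB hBN.le hNd hu hv,
      forall_avgBatchLoss_le_iff (hB.trans hBN.le) le_rfl hNd hu hv]
  · exact (forall_avgBatchLoss_le_iff hB hBN.le hNd etf.1 (huv ▸ etf.1)).2 ⟨huv, etf⟩
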